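/- Let F be a number field, and let b_1, ..., b_m be nonzero algebraic integers in F such that b_i/b_j is not a root of unity for all i ≠ j, and let c_1, ..., c_m ∈ F not all zero. Then the set of positive integers r satisfying Σ_{j=1}^m c_j b_j^r = 0 is finite. -/

import Mathlib

open Polynomial in
theorem aux_arith (p : ℕ) (hp : p.Prime) (M : ℕ) :
    ∃ W : ℕ, Nat.Coprime p W ∧ ∀ k ≤ M, k.factorial ∣ W * p ^ k := by
  haveI := Fact.mk hp
  obtain ⟨V, W, hW, hM⟩ := Nat.exists_eq_pow_mul_and_not_dvd (Nat.factorial_ne_zero M) p hp.ne_one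
  refine ⟨W, (Nat.Prime.coprime_iff_not_dvd hp).2 hW, fun k hk => ?_⟩
  obtain ⟨v, w, hw, hkf⟩ := Nat.exists_eq_pow_mul_and_not_dvd (Nat.factorial_ne_zero k) p hp.ne_one
  have hv : v ≤ k := by
    have h1 : v ≤ padicValNat p k.factorial :=
      (padicValNat_dvd_iff_le (Nat.factorial_ne_zero k)).1 ⟨w, hkf⟩
    have h2 := sub_one_mul_padicValNat_factorial (p := p) k
    have h3 : 1 ≤ p - 1 := by have := hp.two_le; omega
    have h4 := Nat.mul_le_mul_right (padicValNat p k.factorial) h3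
    omega
  have hwW : w ∣ W := by
    have h1 : w ∣ p ^ V * W := by
      rw [← hM]
      exact (Dvd.intro_left _ hkf.symm).trans (Nat.factorial_dvd_factorial hk)
    exact (Nat.Coprime.pow_right V
      ((Nat.Prime.coprime_iff_not_dvd hp).2 hw).symm).dvd_of_dvd_mul_left h1
  rw [hkf, mul_comm]
  exact mul_dvd_mul hwW (pow_dvd_pow p hv)

open Polynomial in
theorem aux_poly (e : ℕ) (q : ℤ) (A B : ℤ[X]) (hA : A.degree < e) (T : Finset ℕ) (hT : T.card = e)
    (hz : ∀ n ∈ T, (A + q • B).eval (n : ℤ) = 0) (t : ℤ) : q ∣ (A + q • B).eval t := by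
  set D : ℤ[X] := ∏ n ∈ T, (X - C (n : ℤ)) with hD
  have hDm : D.Monic := monic_prod_of_monic _ _ fun _ _ => monic_X_sub_C _
  have hdeg : D.degree = e := by
    rw [hD, degree_prod, Finset.sum_congr rfl fun (n : ℕ) _ => degree_X_sub_C (n : ℤ)]
    rw [Finset.sum_const, hT, nsmul_eq_mul, mul_one]
  have hdvd : D ∣ A + q • B := by
    by_cases h0 : A + q • B = 0
    · rw [h0]; exact dvd_zero _
    · have := (Multiset.prod_X_sub_C_dvd_iff_le_roots h0 (T.val.map (fun n : ℕ => (n : ℤ)))).2 ?_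
      · rw [Multiset.map_map] at this
        exact this
      · rw [Multiset.le_iff_subset (T.nodup.map Nat.cast_injective)]
        intro a ha
        rw [Multiset.mem_map] at ha
        obtain ⟨n, hn, rfl⟩ := ha
        exact (mem_roots h0).2 (hz n hn)
  obtain ⟨Q, hQ⟩ := hdvd
  have h1 : q • (B /ₘ D) = Q := by
    have h2 := (div_modByMonic_unique (f := A + q • B) (q • (B /ₘ D)) (A + q • (B %ₘ D)) hDm
      ⟨?_, ?_⟩).1
    · rw [← h2, hQ, mul_divByMonic_cancel_left _ hDm]
    · have h3 := modByMonic_add_div B D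
      nth_rewrite 3 [← h3]
      rw [smul_add, mul_smul_comm]
      ring
    · refine (degree_add_le _ _).trans_lt (max_lt (hA.trans_eq hdeg.symm) ?_)
      exact (degree_smul_le _ _).trans_lt (degree_modByMonic_lt B hDm)
  rw [hQ, ← h1]
  simp only [eval_mul, eval_smul, smul_eq_mul]
  exact ⟨D.eval t * (B /ₘ D).eval t, by ring⟩

open Polynomial in
theorem aux_hansel (p : ℕ) (hp : p.Prime) (s : ℕ → ℤ) (u : ℕ → ℤ)
    (hu : ∀ n, u n = ∑ k ∈ Finset.range (n + 1), (n.choose k : ℤ) * ((p : ℤ) ^ 2) ^ k * s k)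
    (hinf : {n | u n = 0}.Infinite) (t : ℕ) : u t = 0 := by
  have key : ∀ e : ℕ, (p : ℤ) ^ e ∣ u t := by
    intro e
    obtain ⟨T, hTs, hTc⟩ := hinf.exists_subset_card_eq e
    obtain ⟨M, hM⟩ : ∃ M, t ≤ M ∧ e ≤ M + 1 ∧ ∀ n ∈ T, n ≤ M :=
      ⟨t + e + T.sup id, by omega, by omega, fun n hn => by
        have : n ≤ T.sup id := Finset.le_sup (f := id) hn
        omega⟩
    obtain ⟨W, hW, hWd⟩ := aux_arith p hp M
    have : ∀ k, ∃ z : ℕ, k ≤ M → W * p ^ k = k.factorial * z := by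
      intro k
      by_cases hk : k ≤ M
      · obtain ⟨z, hz⟩ := hWd k hk
        exact ⟨z, fun _ => hz⟩
      · exact ⟨0, fun h => absurd h hk⟩
    choose z hz using this
    set A : ℤ[X] := ∑ k ∈ Finset.range e, C ((p : ℤ) ^ k * z k * s k) * descPochhammer ℤ k with hA
    set B : ℤ[X] := ∑ k ∈ Finset.Ico e (M + 1),
      C ((p : ℤ) ^ (k - e) * z k * s k) * descPochhammer ℤ k with hB
    have hsum : A + (p : ℤ) ^ e • B =
        ∑ k ∈ Finset.range (M + 1), C ((p : ℤ) ^ k * z k * s k) * descPochhammer ℤ k := by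
      rw [← Finset.sum_range_add_sum_Ico _ hM.2.1, hA, hB, Finset.smul_sum]
      congr 1
      refine Finset.sum_congr rfl fun k hk => ?_
      rw [smul_eq_C_mul, ← mul_assoc, ← C_mul]
      congr 2
      have : (p : ℤ) ^ k = p ^ e * p ^ (k - e) := by
        rw [← pow_add, Nat.add_sub_cancel' (Finset.mem_Ico.1 hk).1]
      rw [this]; ring
    have heval : ∀ n ≤ M, (A + (p : ℤ) ^ e • B).eval (n : ℤ) = W * u n := by
      intro n hn
      rw [hsum, eval_finsetSum, hu, Finset.mul_sum]
      have hsub : Finset.range (n + 1) ⊆ Finset.range (M + 1) :=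
        Finset.range_subset_range.2 (by omega)
      symm
      rw [Finset.sum_subset hsub]
      · refine Finset.sum_congr rfl fun k hk => ?_
        rw [eval_mul, eval_C, descPochhammer_eval_eq_descFactorial,
          Nat.descFactorial_eq_factorial_mul_choose]
        have h := hz k (by have := Finset.mem_range.1 hk; omega)
        have h' : (W : ℤ) * p ^ k = k.factorial * z k := by exact_mod_cast h
        push_cast
        linear_combination ((n.choose k : ℤ) * p ^ k * s k) * h'
      · intro k _ hk
        rw [Nat.choose_eq_zero_of_lt (by simpa using hk)]
        simp
    have hdeg : A.degree < e := by
      rw [← mem_degreeLT]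
      refine Submodule.sum_mem _ fun k hk => ?_
      rw [mem_degreeLT, ← smul_eq_C_mul]
      refine (degree_smul_le _ _).trans_lt ?_
      refine degree_le_natDegree.trans_lt ?_
      rw [descPochhammer_natDegree]
      exact_mod_cast Finset.mem_range.1 hk
    have := aux_poly e ((p : ℤ) ^ e) A B hdeg T hTc (fun n hn => by
      rw [heval n (hM.2.2 n hn), show u n = 0 from hTs hn, mul_zero]) t
    rw [heval t hM.1] at this
    refine IsCoprime.dvd_of_dvd_mul_left ?_ this
    exact IsCoprime.pow_left (Nat.isCoprime_iff_coprime.2 hW)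
  by_contra hne
  have h1 := Int.natAbs_dvd_natAbs.2 (key (u t).natAbs)
  have h2 := Nat.le_of_dvd (Int.natAbs_pos.2 hne) h1
  rw [Int.natAbs_pow, Int.natAbs_natCast] at h2
  exact absurd (Nat.lt_pow_self hp.one_lt) (not_lt.2 h2)

theorem aux_ring (O : Type*) [CommRing O] [IsDedekindDomain O] [CharZero O] [Module.Free ℤ O]
    [Module.Finite ℤ O] (m : ℕ)
    (b c : Fin m → O) (hb0 : ∀ i, b i ≠ 0)
    (hratio : ∀ i j, i ≠ j → ∀ n : ℕ, 0 < n → b i ^ n ≠ b j ^ n)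
    (hinf : {r : ℕ | ∑ j, c j * b j ^ r = 0}.Infinite) : c = 0 := by
  classical
  set N := Ideal.absNorm (Ideal.span {∏ j, b j}) with hN
  have hBN : (∏ j, b j) ∣ (N : O) := Ideal.mem_span_singleton.1 (Ideal.absNorm_mem _)
  have hN0 : N ≠ 0 := by
    rw [hN, Ne, Ideal.absNorm_eq_zero_iff, Ideal.span_singleton_eq_bot]
    exact Finset.prod_ne_zero_iff.2 fun i _ => hb0 i
  obtain ⟨p, hpN, hp⟩ := Nat.exists_infinite_primes (N + 1)
  have hcop : Nat.Coprime N (p ^ 2) := by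
    refine Nat.Coprime.pow_right 2 (Nat.Coprime.symm ((Nat.Prime.coprime_iff_not_dvd hp).2 ?_))
    intro h
    have := Nat.le_of_dvd (Nat.pos_of_ne_zero hN0) h
    omega
  set I : Ideal O := Ideal.span {((p : O) ^ 2)} with hI
  have hI0 : I ≠ ⊥ := by
    rw [hI, Ne, Ideal.span_singleton_eq_bot]
    exact pow_ne_zero _ (Nat.cast_ne_zero.2 hp.ne_zero)
  haveI : Finite (O ⧸ I) := Ideal.finiteQuotientOfFreeOfNeBot I hI0
  have hunit : ∀ j, IsUnit (Ideal.Quotient.mk I (b j)) := by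
    intro j
    have h1 : IsCoprime (N : O) ((p : O) ^ 2) := by
      have := (Nat.isCoprime_iff_coprime.2 hcop).map (Int.castRingHom O)
      simpa using this
    have h2 : IsCoprime (b j) ((p : O) ^ 2) :=
      h1.of_isCoprime_of_dvd_left ((Finset.dvd_prod_of_mem b (Finset.mem_univ j)).trans hBN)
    obtain ⟨x, y, hxy⟩ := h2
    refine IsUnit.of_mul_eq_one (Ideal.Quotient.mk I x) ?_
    rw [← map_mul, ← map_one (Ideal.Quotient.mk I), Ideal.Quotient.eq, hI,
      Ideal.mem_span_singleton]
    exact ⟨-y, by linear_combination hxy⟩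
  set d := Nat.card (O ⧸ I)ˣ with hd
  have hd0 : 0 < d := Nat.card_pos
  have hx : ∀ j, ∃ x, b j ^ d = (p : O) ^ 2 * x + 1 := by
    intro j
    have h1 : Ideal.Quotient.mk I (b j ^ d) = Ideal.Quotient.mk I 1 := by
      rw [map_pow, map_one, ← (hunit j).unit_spec, ← Units.val_pow_eq_pow_val, hd,
        pow_card_eq_one', Units.val_one]
    rw [Ideal.Quotient.eq, hI, Ideal.mem_span_singleton] at h1
    obtain ⟨x, hx⟩ := h1
    exact ⟨x, by linear_combination hx⟩
  choose x hx using hx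
  -- pigeonhole
  obtain ⟨a, ha⟩ : ∃ a : ℕ, {n : ℕ | ∑ j, c j * b j ^ (a + d * n) = 0}.Infinite := by
    by_contra hcon
    push Not at hcon
    refine hinf (Set.Finite.subset (Set.Finite.biUnion (Set.finite_lt_nat d)
      (fun a _ => (hcon a).image (fun n => a + d * n))) ?_)
    intro r hr
    simp only [Set.mem_iUnion]
    refine ⟨r % d, Nat.mod_lt _ hd0, r / d, ?_, Nat.mod_add_div r d⟩
    simpa [Nat.mod_add_div] using hr
  have hexp : ∀ n, ∑ j, c j * b j ^ (a + d * n) =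
      ∑ k ∈ Finset.range (n + 1), ((n.choose k : ℤ) * ((p : ℤ) ^ 2) ^ k) •
        ∑ j, c j * b j ^ a * x j ^ k := by
    intro n
    simp_rw [Finset.smul_sum]
    rw [Finset.sum_comm]
    refine Finset.sum_congr rfl fun j _ => ?_
    rw [pow_add, pow_mul, hx, add_pow, Finset.mul_sum, Finset.mul_sum]
    refine Finset.sum_congr rfl fun k _ => ?_
    rw [zsmul_eq_mul]
    push_cast
    ring
  have hzero : ∀ n, ∑ j, c j * b j ^ (a + d * n) = 0 := by
    intro n
    let β := Module.Free.chooseBasis ℤ O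
    refine β.ext_elem fun i => ?_
    rw [map_zero, Finsupp.zero_apply]
    refine aux_hansel p hp (fun k => β.repr (∑ j, c j * b j ^ a * x j ^ k) i)
      (fun n => β.repr (∑ j, c j * b j ^ (a + d * n)) i) ?_ ?_ n
    · intro n
      change β.coord i _ = ∑ k ∈ _, _ * β.coord i _
      rw [hexp, map_sum]
      refine Finset.sum_congr rfl fun k _ => ?_
      rw [map_smul, smul_eq_mul]
    · refine ha.mono fun n hn => ?_
      have hn' : ∑ j, c j * b j ^ (a + d * n) = 0 := hn
      simp only [Set.mem_ofPred_eq]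
      rw [hn', map_zero, Finsupp.zero_apply]
  have hinj : Function.Injective (fun j => b j ^ d) := by
    intro i j hij
    by_contra hne
    exact hratio i j hne d hd0 hij
  have hv := Matrix.eq_zero_of_forall_pow_sum_mul_pow_eq_zero (v := fun j => c j * b j ^ a) hinj
    (fun i => by
      rw [← hzero i]
      refine Finset.sum_congr rfl fun j _ => ?_
      rw [pow_add, pow_mul, mul_assoc])
  funext j
  have := congrFun hv j
  exact (mul_eq_zero.1 this).resolve_right (pow_ne_zero _ (hb0 j))

/-- Let `F` be a number field and `b₁,…,b_m` nonzero algebraic integers in `F` such that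
`b_i/b_j` is not a root of unity for `i ≠ j`, and `c₁,…,c_m ∈ F` not all zero.  Then the set
of positive integers `r` with `Σ_j c_j b_j^r = 0` is finite. -/
theorem stmt_14 (F : Type*) [Field F] [NumberField F] (m : ℕ)
    (b c : Fin m → F) (hbint : ∀ i, IsIntegral ℤ (b i)) (hb0 : ∀ i, b i ≠ 0)
    (hratio : ∀ i j, i ≠ j → ∀ n : ℕ, 0 < n → (b i / b j) ^ n ≠ 1)
    (hc : ∃ i, c i ≠ 0) :
    {r : ℕ | 0 < r ∧ ∑ j, c j * b j ^ r = 0}.Finite := by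
  by_contra hinf
  obtain ⟨D, hD⟩ := IsLocalization.exist_integer_multiples_of_finite
    (nonZeroDivisors (NumberField.RingOfIntegers F)) c
  choose c' hc' using hD
  let b' : Fin m → NumberField.RingOfIntegers F := fun i => ⟨b i, hbint i⟩
  have hb' : ∀ i, algebraMap (NumberField.RingOfIntegers F) F (b' i) = b i := fun i => rfl
  have hD0 : algebraMap (NumberField.RingOfIntegers F) F D ≠ 0 := by
    rw [Ne, FaithfulSMul.algebraMap_eq_zero_iff]
    exact nonZeroDivisors.coe_ne_zero D
  have hz := aux_ring (NumberField.RingOfIntegers F) m b' c' (fun i h => hb0 i (by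
      rw [← hb', h, map_zero])) (fun i j hij n hn h => by
      refine hratio i j hij n hn ?_
      rw [div_pow, div_eq_one_iff_eq (pow_ne_zero _ (hb0 j)), ← hb', ← hb', ← map_pow, h, map_pow])
    (Set.Infinite.mono (fun r hr => by
      apply FaithfulSMul.algebraMap_injective (NumberField.RingOfIntegers F) F
      rw [map_sum, map_zero, ← mul_zero (algebraMap (NumberField.RingOfIntegers F) F D), ← hr.2,
        Finset.mul_sum]
      refine Finset.sum_congr rfl fun j _ => ?_
      rw [map_mul, map_pow, hb', hc', Algebra.smul_def, mul_assoc]) hinf)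
  obtain ⟨i, hi⟩ := hc
  have h1 := hc' i
  rw [hz, Pi.zero_apply, map_zero, Algebra.smul_def] at h1
  exact (mul_ne_zero hD0 hi) h1.symm
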